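/- arXiv:2011.10876 — 2 statements merged into one kernel-verified Lean document; each statement's English description precedes it below -/
import Mathlib

section
/- Suppose the subsystems satisfy the standing structural assumptions (finite neighborhoods and continuous f_i), the family (A_i)_{i∈ℕ} of nonempty closed sets is uniformly bounded, and for some M ∈ ℕ the Lyapunov-type assumptions and the uniformity assumptions hold. Then the M-iterate Σ^M is well-posed: for every ξ ∈ X and every admissible input u, x(M,ξ,u) ∈ X, and consequently x(kM,ξ,u) ∈ X for all k ∈ ℕ. -/
/-!
Since the sets `A i` are uniformly bounded, a point `x` is bounded iff its distances to the `A i`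
are, and by the uniform comparison functions iff the values `W i (x i)` are. In terms of the latter,
one `M`-step preserves boundedness because the gains are dominated by `α` and `γu`, uniformly in the
indices. Time shifts of admissible inputs are admissible, so `M`-steps can be iterated.
-/

noncomputable section

/-- Class `K` comparison functions on `[0,∞)`. -/
def ClassK (γ : ℝ → ℝ) : Prop :=
  ContinuousOn γ (Set.Ici 0) ∧ StrictMonoOn γ (Set.Ici 0) ∧ γ 0 = 0

/-- Class `K∞` comparison functions: class `K` and unbounded. -/
def ClassKinf (γ : ℝ → ℝ) : Prop :=
  ClassK γ ∧ ∀ c : ℝ, ∃ s : ℝ, 0 ≤ s ∧ c < γ s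

/-- Class `KL` comparison functions. -/
def ClassKL (β : ℝ → ℝ → ℝ) : Prop :=
  ContinuousOn (fun p : ℝ × ℝ => β p.1 p.2) (Set.Ici 0 ×ˢ Set.Ici 0) ∧
    (∀ t : ℝ, 0 ≤ t → ClassK fun r => β r t) ∧
    (∀ r : ℝ, 0 < r → StrictAntiOn (β r) (Set.Ici 0) ∧
      Filter.Tendsto (fun t => β r t) Filter.atTop (nhds 0))

section Network

variable {E : ℕ → Type*} [∀ i, NormedAddCommGroup (E i)]
variable {P : ℕ → Type*} [∀ i, NormedAddCommGroup (P i)]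

/-- Membership in `ℓ∞(ℕ,(n_i))`: a uniformly bounded sequence. -/
def Bdd {G : ℕ → Type*} [∀ i, NormedAddCommGroup (G i)] (x : ∀ i, G i) : Prop :=
  ∃ C : ℝ, ∀ i, ‖x i‖ ≤ C

/-- The sup norm `|x|_∞ = sup_i |x_i|`. -/
def supNorm {G : ℕ → Type*} [∀ i, NormedAddCommGroup (G i)] (x : ∀ i, G i) : ℝ :=
  ⨆ i, ‖x i‖

/-- Admissible external input signals: uniformly bounded sequences in `U`. -/
def AdmInput {G : ℕ → Type*} [∀ i, NormedAddCommGroup (G i)] (u : ℕ → ∀ i, G i) : Prop :=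
  ∃ C : ℝ, ∀ k i, ‖u k i‖ ≤ C

/-- `‖u‖_∞ = sup_k |u(k)|_∞`. -/
def inputNorm {G : ℕ → Type*} [∀ i, NormedAddCommGroup (G i)] (u : ℕ → ∀ i, G i) : ℝ :=
  ⨆ k, supNorm (u k)

/-- The set `A = X ∩ ∏_i A_i`. -/
def setA (A : ∀ i, Set (E i)) : Set (∀ i, E i) :=
  {y | Bdd y ∧ ∀ i, y i ∈ A i}

/-- The distance `|x|_A = inf_{y ∈ A} |x − y|_∞` from `x` to a set `A ⊆ X`. -/
def distA (x : ∀ i, E i) (A : Set (∀ i, E i)) : ℝ :=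
  sInf ((fun y => supNorm (x - y)) '' A)

variable (I : ℕ → Finset ℕ)

/-- The network map `f(x,u) = (f_i(x_i, x̄_i, u_i))_{i∈ℕ}`. -/
def netF (f : ∀ i, E i → ((j : I i) → E j.1) → P i → E i)
    (x : ∀ i, E i) (u : ∀ i, P i) : ∀ i, E i :=
  fun i => f i (x i) (fun j => x j.1) (u i)

/-- Solution of the discrete-time system `x⁺ = F(x,u)` in the extended state space. -/
def traj (F : (∀ i, E i) → (∀ i, P i) → ∀ i, E i)
    (ξ : ∀ i, E i) (u : ℕ → ∀ i, P i) : ℕ → ∀ i, E i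
  | 0 => ξ
  | k + 1 => F (traj F ξ u k) (u k)

section UniformComparison

variable {ι : Type*} {g h : ι → ℝ} {ω : ℝ → ℝ}

theorem bddAbove_range_of_le_monotoneOn (hω : MonotoneOn ω (Set.Ici 0)) (hg : ∀ i, 0 ≤ g i)
    (hle : ∀ i, h i ≤ ω (g i)) (hbdd : BddAbove (Set.range g)) : BddAbove (Set.range h) := by
  obtain ⟨b, hb⟩ := hbdd
  refine ⟨ω b, Set.forall_mem_range.2 fun i => (hle i).trans ?_⟩
  have hgb : g i ≤ b := hb (Set.mem_range_self i)
  exact hω (hg i) ((hg i).trans hgb) hgb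

theorem bddAbove_range_of_tendsto_atTop_le (hω : Filter.Tendsto ω Filter.atTop Filter.atTop)
    (hle : ∀ i, ω (g i) ≤ h i) (hbdd : BddAbove (Set.range h)) : BddAbove (Set.range g) := by
  obtain ⟨b, hb⟩ := hbdd
  obtain ⟨r, hr⟩ := Filter.eventually_atTop.1 (hω.eventually_gt_atTop b)
  refine ⟨r, Set.forall_mem_range.2 fun i => le_of_not_ge fun hri => ?_⟩
  exact (hr (g i) hri).not_ge ((hle i).trans (hb (Set.mem_range_self i)))

theorem bddAbove_range_iSup_gain {κ : Type*} [Nonempty κ] {γ : ι → κ → ℝ → ℝ} {v : κ → ℝ}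
    (hω : MonotoneOn ω (Set.Ici 0)) (hγ : ∀ i j s, 0 ≤ s → γ i j s ≤ ω s) (hv : ∀ j, 0 ≤ v j)
    (hbdd : BddAbove (Set.range v)) : BddAbove (Set.range fun i => ⨆ j, γ i j (v j)) := by
  obtain ⟨b, hb⟩ := bddAbove_range_of_le_monotoneOn hω hv (fun _ => le_rfl) hbdd
  refine ⟨b, Set.forall_mem_range.2 fun i => ciSup_le fun j => ?_⟩
  exact (hγ i j _ (hv j)).trans (hb (Set.mem_range_self j))

end UniformComparison

theorem ClassK.monotoneOn {γ : ℝ → ℝ} (hγ : ClassK γ) : MonotoneOn γ (Set.Ici 0) :=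
  hγ.2.1.monotoneOn

theorem ClassKinf.tendsto_atTop {γ : ℝ → ℝ} (hγ : ClassKinf γ) :
    Filter.Tendsto γ Filter.atTop Filter.atTop := by
  refine Filter.tendsto_atTop.2 fun c => ?_
  obtain ⟨s, hs, hcs⟩ := hγ.2 c
  filter_upwards [Filter.eventually_ge_atTop s] with t hst
  exact hcs.le.trans (hγ.1.monotoneOn hs (hs.trans hst) hst)

section InfDist

variable {V : Type*} [SeminormedAddCommGroup V] {s : Set V} {C : ℝ}

theorem infDist_le_norm_add (hs : s.Nonempty) (hC : ∀ a ∈ s, ‖a‖ ≤ C) (x : V) :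
    Metric.infDist x s ≤ ‖x‖ + C := by
  obtain ⟨a, ha⟩ := hs
  calc Metric.infDist x s ≤ dist x a := Metric.infDist_le_dist_of_mem ha
    _ ≤ ‖x‖ + ‖a‖ := dist_le_norm_add_norm x a
    _ ≤ ‖x‖ + C := by gcongr; exact hC a ha

theorem norm_le_infDist_add (hs : s.Nonempty) (hC : ∀ a ∈ s, ‖a‖ ≤ C) (x : V) :
    ‖x‖ ≤ Metric.infDist x s + C := by
  refine sub_le_iff_le_add.1 ((Metric.le_infDist hs).2 fun a ha => ?_)
  calc ‖x‖ - C ≤ ‖x‖ - ‖a‖ := by gcongr; exact hC a ha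
    _ ≤ ‖x - a‖ := norm_sub_norm_le x a
    _ = dist x a := (dist_eq_norm x a).symm

end InfDist

section BoundedStates

variable {A : ∀ i, Set (E i)}

theorem bdd_iff_bddAbove_infDist (hne : ∀ i, (A i).Nonempty)
    (hub : ∃ C : ℝ, ∀ i, ∀ a ∈ A i, ‖a‖ ≤ C) {x : ∀ i, E i} :
    Bdd x ↔ BddAbove (Set.range fun i => Metric.infDist (x i) (A i)) := by
  obtain ⟨C, hC⟩ := hub
  constructor
  · rintro ⟨D, hD⟩
    refine ⟨D + C, Set.forall_mem_range.2 fun i => ?_⟩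
    exact (infDist_le_norm_add (hne i) (hC i) (x i)).trans (by gcongr; exact hD i)
  · rintro ⟨D, hD⟩
    refine ⟨D + C, fun i => (norm_le_infDist_add (hne i) (hC i) (x i)).trans ?_⟩
    gcongr
    exact hD (Set.mem_range_self i)

theorem bdd_iff_bddAbove_lyapunov (hne : ∀ i, (A i).Nonempty)
    (hub : ∃ C : ℝ, ∀ i, ∀ a ∈ A i, ‖a‖ ≤ C) {W : ∀ i, E i → ℝ} {ωl ωu : ℝ → ℝ}
    (hωl : Filter.Tendsto ωl Filter.atTop Filter.atTop) (hωu : MonotoneOn ωu (Set.Ici 0))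
    (hWl : ∀ i y, ωl (Metric.infDist y (A i)) ≤ W i y)
    (hWu : ∀ i y, W i y ≤ ωu (Metric.infDist y (A i)))
    {x : ∀ i, E i} :
    Bdd x ↔ BddAbove (Set.range fun i => W i (x i)) := by
  rw [bdd_iff_bddAbove_infDist hne hub]
  exact ⟨bddAbove_range_of_le_monotoneOn hωu (fun _ => Metric.infDist_nonneg) fun i => hWu i (x i),
    bddAbove_range_of_tendsto_atTop_le hωl fun i => hWl i (x i)⟩

end BoundedStates

theorem inputNorm_nonneg (u : ℕ → ∀ i, P i) : 0 ≤ inputNorm u :=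
  Real.iSup_nonneg fun _ => Real.iSup_nonneg fun _ => norm_nonneg _

theorem AdmInput.comp {u : ℕ → ∀ i, P i} (hu : AdmInput u) (φ : ℕ → ℕ) :
    AdmInput fun k => u (φ k) :=
  hu.imp fun _ hC k => hC (φ k)

theorem traj_add {X U : ℕ → Type*} (F : (∀ i, X i) → (∀ i, U i) → ∀ i, X i)
    (ξ : ∀ i, X i) (u : ℕ → ∀ i, U i) (m n : ℕ) :
    traj F ξ u (m + n) = traj F (traj F ξ u m) (fun k => u (m + k)) n := by
  induction n with
  | zero => rfl
  | succ n ih => exact congrArg (F · (u (m + n))) ih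

theorem bdd_traj_mul {F : (∀ i, E i) → (∀ i, P i) → ∀ i, E i} {M : ℕ}
    (hstep : ∀ ξ : ∀ i, E i, Bdd ξ → ∀ u : ℕ → ∀ i, P i, AdmInput u → Bdd (traj F ξ u M))
    {ξ : ∀ i, E i} (hξ : Bdd ξ) {u : ℕ → ∀ i, P i} (hu : AdmInput u) (k : ℕ) :
    Bdd (traj F ξ u (k * M)) := by
  induction k with
  | zero => simpa only [Nat.zero_mul, traj] using hξ
  | succ k ih =>
    rw [Nat.succ_mul, traj_add]
    exact hstep _ ih _ (hu.comp (k * M + ·))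

theorem stmt12_general {F : (∀ i, E i) → (∀ i, P i) → ∀ i, E i} {A : ∀ i, Set (E i)}
    (hne : ∀ i, (A i).Nonempty) (hub : ∃ C : ℝ, ∀ i, ∀ a ∈ A i, ‖a‖ ≤ C) {M : ℕ}
    {W : ∀ i, E i → ℝ} (hWnn : ∀ i y, 0 ≤ W i y) {ωl ωu : ℝ → ℝ}
    (hωl : Filter.Tendsto ωl Filter.atTop Filter.atTop) (hωu : MonotoneOn ωu (Set.Ici 0))
    (hWl : ∀ i y, ωl (Metric.infDist y (A i)) ≤ W i y)
    (hWu : ∀ i y, W i y ≤ ωu (Metric.infDist y (A i)))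
    {γij : ℕ → ℕ → ℝ → ℝ} {γiu : ℕ → ℝ → ℝ}
    (hdecay : ∀ ξ : ∀ i, E i, Bdd ξ → ∀ u : ℕ → ∀ i, P i, AdmInput u →
      ∀ i, W i (traj F ξ u M i) ≤ max (⨆ j, γij i j (W j (ξ j))) (γiu i (inputNorm u)))
    {α : ℝ → ℝ} (hα : MonotoneOn α (Set.Ici 0)) (hγij : ∀ i j s, 0 ≤ s → γij i j s ≤ α s)
    {γu : ℝ → ℝ} (hγiu : ∀ i s, 0 ≤ s → γiu i s ≤ γu s)
    (ξ : ∀ i, E i) (hξ : Bdd ξ) (u : ℕ → ∀ i, P i) (hu : AdmInput u) (k : ℕ) :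
    Bdd (traj F ξ u (k * M)) := by
  refine bdd_traj_mul (fun ξ hξ u hu => ?_) hξ hu k
  have bdd_iff {x : ∀ i, E i} : Bdd x ↔ BddAbove (Set.range fun i => W i (x i)) :=
    bdd_iff_bddAbove_lyapunov hne hub hωl hωu hWl hWu
  obtain ⟨b, hb⟩ := bddAbove_range_iSup_gain hα hγij (fun j => hWnn j (ξ j)) (bdd_iff.1 hξ)
  refine bdd_iff.2 ⟨max b (γu (inputNorm u)), Set.forall_mem_range.2 fun i => ?_⟩
  exact (hdecay ξ hξ u hu i).trans
    (max_le_max (hb (Set.mem_range_self i)) (hγiu i _ (inputNorm_nonneg u)))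

/-- Under the Lyapunov-type and uniformity assumptions and uniform boundedness of the
sets `A_i`, the `M`-iterate `Σ^M` is well-posed. -/
theorem stmt12
    [∀ i, NormedSpace ℝ (E i)] [∀ i, FiniteDimensional ℝ (E i)] [∀ i, Nontrivial (E i)]
    [∀ i, NormedSpace ℝ (P i)] [∀ i, FiniteDimensional ℝ (P i)] [∀ i, Nontrivial (P i)]
    (hself : ∀ i, i ∉ I i)
    (hloc : ∀ i, {j | i ∈ I j}.Finite)
    (f : ∀ i, E i → ((j : I i) → E j.1) → P i → E i)
    (hf : ∀ i, Continuous fun q : E i × ((j : I i) → E j.1) × P i => f i q.1 q.2.1 q.2.2)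
    (A : ∀ i, Set (E i)) (hne : ∀ i, (A i).Nonempty) (hcl : ∀ i, IsClosed (A i))
    (hub : ∃ C : ℝ, 0 < C ∧ ∀ i, ∀ a ∈ A i, ‖a‖ ≤ C)
    (M : ℕ) (hM : 0 < M)
    -- Lyapunov-type assumptions
    (W : ∀ i, E i → ℝ) (hWcont : ∀ i, Continuous (W i)) (hWnn : ∀ i ξi, 0 ≤ W i ξi)
    (ωl ωu : ℕ → ℝ → ℝ) (hωl : ∀ i, ClassKinf (ωl i)) (hωu : ∀ i, ClassKinf (ωu i))
    (hsandwich : ∀ (i : ℕ) (ξi : E i),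
      ωl i (Metric.infDist ξi (A i)) ≤ W i ξi ∧ W i ξi ≤ ωu i (Metric.infDist ξi (A i)))
    (γij : ℕ → ℕ → ℝ → ℝ)
    (hγij : ∀ i j, ClassKinf (γij i j) ∨ γij i j = fun _ => 0)
    (γiu : ℕ → ℝ → ℝ) (hγiu : ∀ i, ClassK (γiu i))
    (hdecay : ∀ (ξ : ∀ i, E i), Bdd ξ → ∀ u : ℕ → ∀ i, P i, AdmInput u →
      ∀ i, W i (traj (netF I f) ξ u M i) ≤
        max (⨆ j, γij i j (W j (ξ j))) (γiu i (inputNorm u)))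
    -- Uniformity assumptions
    (ωlb ωub : ℝ → ℝ) (hωlb : ClassKinf ωlb) (hωub : ClassKinf ωub)
    (hunifω : ∀ (i : ℕ) (s : ℝ), 0 ≤ s →
      ωlb s ≤ ωl i s ∧ ωl i s ≤ ωu i s ∧ ωu i s ≤ ωub s)
    (α : ℝ → ℝ) (hα : ClassKinf α) (hαid : ∀ s : ℝ, 0 < s → α s < s)
    (hunifγ : ∀ (i j : ℕ) (s : ℝ), 0 ≤ s → γij i j s ≤ α s)
    (γu : ℝ → ℝ) (hγu : ClassK γu)
    (hunifγu : ∀ (i : ℕ) (s : ℝ), 0 ≤ s → γiu i s ≤ γu s) :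
    ∀ (ξ : ∀ i, E i), Bdd ξ → ∀ u : ℕ → ∀ i, P i, AdmInput u →
      ∀ k : ℕ, Bdd (traj (netF I f) ξ u (k * M)) :=
  stmt12_general hne (hub.imp fun _ hC => hC.2) hWnn hωlb.tendsto_atTop hωub.1.monotoneOn
    (fun i y => (hunifω i _ Metric.infDist_nonneg).1.trans (hsandwich i y).1)
    (fun i y => (hsandwich i y).2.trans (hunifω i _ Metric.infDist_nonneg).2.2)
    hdecay hα.1.monotoneOn hunifγ hunifγu

end Network
end
end

section
/- Consider a well-posed infinite network Σ and nonempty closed sets A_i ⊆ ℝ^{n_i} with A = X ∩ ∏_{i∈ℕ} A_i nonempty. If Σ is eISS with respect to A, then there exist M ∈ ℕ, a constant c ∈ [0,1) and γ of class K such that the functions W_i(x_i) := |x_i|_{A_i} satisfy, for all i ∈ ℕ, all ξ ∈ X and all admissible inputs u: |x_i(M,ξ,u)|_{A_i} ≤ max{sup_{j∈ℕ} c·|ξ_j|_{A_j}, γ(‖u‖_∞)}. In particular, the Lyapunov-type and uniformity assumptions hold with W_i = |·|_{A_i}, ω̲_i = ω̄_i = id, γ_ij(s) = c·s, γ_iu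 = γ, α(s) = c·s and γ̄_u = γ. -/
noncomputable section

section Network

variable {E : ℕ → Type*} [∀ i, NormedAddCommGroup (E i)]
variable {P : ℕ → Type*} [∀ i, NormedAddCommGroup (P i)]

variable (I : ℕ → Finset ℕ)

/-- Exponential input-to-state stability of `x⁺ = F(x,u)` with respect to a set `S ⊆ X`, in its
max-form; the estimate is required on `X = ℓ∞` only, although `F` acts on all sequences. -/
def IsEISS (F : (∀ i, E i) → (∀ i, P i) → ∀ i, E i) (S : Set (∀ i, E i)) : Prop :=
  ∃ C ρ : ℝ, ∃ γ : ℝ → ℝ, 1 ≤ C ∧ 0 ≤ ρ ∧ ρ < 1 ∧ ClassK γ ∧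
    ∀ (ξ : ∀ i, E i), Bdd ξ → ∀ u : ℕ → ∀ i, P i, AdmInput u →
      ∀ k : ℕ, distA (traj F ξ u k) S ≤ max (C * ρ ^ k * distA ξ S) (γ (inputNorm u))

section SupNorm

variable {x y : ∀ i, E i}

theorem Bdd.sub (hx : Bdd x) (hy : Bdd y) : Bdd (x - y) := by
  obtain ⟨a, ha⟩ := hx
  obtain ⟨b, hb⟩ := hy
  exact ⟨a + b, fun i => norm_sub_le_of_le (ha i) (hb i)⟩

theorem Bdd.norm_le_supNorm (hx : Bdd x) (i : ℕ) : ‖x i‖ ≤ supNorm x := by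
  obtain ⟨C, hC⟩ := hx
  exact le_ciSup (f := fun i => ‖x i‖) ⟨C, Set.forall_mem_range.2 hC⟩ i

theorem supNorm_nonneg (x : ∀ i, E i) : 0 ≤ supNorm x :=
  Real.iSup_nonneg fun i => norm_nonneg (x i)

theorem supNorm_le {C : ℝ} (hC : ∀ i, ‖x i‖ ≤ C) : supNorm x ≤ C :=
  ciSup_le hC

end SupNorm

section Distance

variable {A : ∀ i, Set (E i)} {x y : ∀ i, E i}

theorem distA_le_supNorm_sub {S : Set (∀ i, E i)} (hy : y ∈ S) :
    distA x S ≤ supNorm (x - y) :=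
  csInf_le ⟨0, Set.forall_mem_image.2 fun z _ => supNorm_nonneg (x - z)⟩
    (Set.mem_image_of_mem _ hy)

theorem infDist_le_supNorm_sub (hx : Bdd x) (hy : y ∈ setA A) (i : ℕ) :
    Metric.infDist (x i) (A i) ≤ supNorm (x - y) :=
  calc
    Metric.infDist (x i) (A i) ≤ dist (x i) (y i) := Metric.infDist_le_dist_of_mem (hy.2 i)
    _ = ‖(x - y) i‖ := dist_eq_norm _ _
    _ ≤ supNorm (x - y) := (hx.sub hy.1).norm_le_supNorm i

theorem infDist_le_distA (hA : (setA A).Nonempty) (hx : Bdd x) (i : ℕ) :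
    Metric.infDist (x i) (A i) ≤ distA x (setA A) :=
  le_csInf (hA.image _) <| Set.forall_mem_image.2 fun _ hy => infDist_le_supNorm_sub hx hy i

theorem bddAbove_range_infDist (hA : (setA A).Nonempty) (hx : Bdd x) :
    BddAbove (Set.range fun i => Metric.infDist (x i) (A i)) :=
  ⟨distA x (setA A), Set.forall_mem_range.2 (infDist_le_distA hA hx)⟩

/-- Choosing in each `A i` a point that is nearest up to the same `ε` gives a sequence at bounded
distance from `x`; it is therefore itself bounded, hence a competitor in the infimum `distA`. -/
theorem distA_setA_le_iSup_infDist (hA : (setA A).Nonempty) (hx : Bdd x) :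
    distA x (setA A) ≤ ⨆ i, Metric.infDist (x i) (A i) := by
  refine le_of_forall_pos_le_add fun ε hε => ?_
  have hA_nonempty (i : ℕ) : (A i).Nonempty := hA.elim fun z hz => ⟨z i, hz.2 i⟩
  have exists_near (i : ℕ) : ∃ y ∈ A i, dist (x i) y < Metric.infDist (x i) (A i) + ε :=
    (Metric.infDist_lt_iff (hA_nonempty i)).1 (lt_add_of_pos_right _ hε)
  choose y hyA hy_near using exists_near
  have norm_sub_le_iSup (i : ℕ) : ‖(x - y) i‖ ≤ (⨆ j, Metric.infDist (x j) (A j)) + ε :=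
    calc
      ‖(x - y) i‖ = dist (x i) (y i) := (dist_eq_norm _ _).symm
      _ ≤ Metric.infDist (x i) (A i) + ε := (hy_near i).le
      _ ≤ (⨆ j, Metric.infDist (x j) (A j)) + ε := by
        gcongr
        exact le_ciSup (bddAbove_range_infDist hA hx) i
  have hxy : Bdd (x - y) := ⟨_, norm_sub_le_iSup⟩
  have hy : Bdd y := by simpa only [sub_sub_cancel] using hx.sub hxy
  have hy_mem : y ∈ setA A := ⟨hy, hyA⟩
  exact (distA_le_supNorm_sub hy_mem).trans (supNorm_le norm_sub_le_iSup)

theorem distA_setA_eq_iSup_infDist (hA : (setA A).Nonempty) (hx : Bdd x) :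
    distA x (setA A) = ⨆ i, Metric.infDist (x i) (A i) :=
  (distA_setA_le_iSup_infDist hA hx).antisymm (ciSup_le (infDist_le_distA hA hx))

end Distance

theorem AdmInput.bdd {u : ℕ → ∀ i, P i} (hu : AdmInput u) (k : ℕ) : Bdd (u k) :=
  hu.imp fun _ hC => hC k

theorem bdd_traj {F : (∀ i, E i) → (∀ i, P i) → ∀ i, E i}
    (hF : ∀ x u, Bdd x → Bdd u → Bdd (F x u)) {ξ : ∀ i, E i} (hξ : Bdd ξ)
    {u : ℕ → ∀ i, P i} (hu : AdmInput u) (k : ℕ) : Bdd (traj F ξ u k) := by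
  induction k with
  | zero => exact hξ
  | succ k ih => exact hF _ _ ih (hu.bdd k)

theorem exists_pos_mul_pow_lt_one (C : ℝ) {ρ : ℝ} (hρ0 : 0 ≤ ρ) (hρ1 : ρ < 1) :
    ∃ M : ℕ, 0 < M ∧ C * ρ ^ M < 1 := by
  have tendsto_zero : Filter.Tendsto (fun M : ℕ => C * ρ ^ M) Filter.atTop (nhds 0) := by
    simpa only [mul_zero] using (tendsto_pow_atTop_nhds_zero_of_lt_one hρ0 hρ1).const_mul C
  exact ((Filter.eventually_gt_atTop 0).and (tendsto_zero.eventually_lt_const one_pos)).exists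

theorem stmt15_general {F : (∀ i, E i) → (∀ i, P i) → ∀ i, E i}
    (hF : ∀ x u, Bdd x → Bdd u → Bdd (F x u))
    {A : ∀ i, Set (E i)} (hA : (setA A).Nonempty) (heISS : IsEISS F (setA A)) :
    ∃ M : ℕ, 0 < M ∧ ∃ c : ℝ, 0 ≤ c ∧ c < 1 ∧ ∃ γ : ℝ → ℝ, ClassK γ ∧
      ∀ (ξ : ∀ i, E i), Bdd ξ → ∀ u : ℕ → ∀ i, P i, AdmInput u →
        ∀ i : ℕ, Metric.infDist (traj F ξ u M i) (A i) ≤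
          max (⨆ j, c * Metric.infDist (ξ j) (A j)) (γ (inputNorm u)) := by
  obtain ⟨C, ρ, γ, hC, hρ0, hρ1, hγ, hdecay⟩ := heISS
  obtain ⟨M, hM, hlt⟩ := exists_pos_mul_pow_lt_one C hρ0 hρ1
  have hc : 0 ≤ C * ρ ^ M := by positivity
  refine ⟨M, hM, C * ρ ^ M, hc, hlt, γ, hγ, fun ξ hξ u hu i => ?_⟩
  calc
    Metric.infDist (traj F ξ u M i) (A i)
    _ ≤ distA (traj F ξ u M) (setA A) := infDist_le_distA hA (bdd_traj hF hξ hu M) i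
    _ ≤ max (C * ρ ^ M * distA ξ (setA A)) (γ (inputNorm u)) := hdecay ξ hξ u hu M
    _ = max (⨆ j, C * ρ ^ M * Metric.infDist (ξ j) (A j)) (γ (inputNorm u)) := by
      rw [distA_setA_eq_iSup_infDist hA hξ, Real.mul_iSup_of_nonneg hc]

/-- Necessity of the small-gain condition: if the well-posed infinite network is
eISS w.r.t. `A`, then the functions `W_i = dist(·, A_i)` satisfy the Lyapunov-type
estimate with identical linear gains `c < 1`. -/
theorem stmt15
    [∀ i, NormedSpace ℝ (E i)] [∀ i, FiniteDimensional ℝ (E i)] [∀ i, Nontrivial (E i)]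
    [∀ i, NormedSpace ℝ (P i)] [∀ i, FiniteDimensional ℝ (P i)] [∀ i, Nontrivial (P i)]
    (hself : ∀ i, i ∉ I i)
    (hloc : ∀ i, {j | i ∈ I j}.Finite)
    (f : ∀ i, E i → ((j : I i) → E j.1) → P i → E i)
    (hf : ∀ i, Continuous fun q : E i × ((j : I i) → E j.1) × P i => f i q.1 q.2.1 q.2.2)
    (hwp : ∀ (x : ∀ i, E i) (u : ∀ i, P i), Bdd x → Bdd u → Bdd (netF I f x u))
    (A : ∀ i, Set (E i)) (hne : ∀ i, (A i).Nonempty) (hcl : ∀ i, IsClosed (A i))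
    (hAne : (setA A).Nonempty)
    (heISS : ∃ C ρ : ℝ, ∃ γ : ℝ → ℝ, 1 ≤ C ∧ 0 ≤ ρ ∧ ρ < 1 ∧ ClassK γ ∧
      ∀ (ξ : ∀ i, E i), Bdd ξ → ∀ u : ℕ → ∀ i, P i, AdmInput u →
        ∀ k : ℕ, distA (traj (netF I f) ξ u k) (setA A) ≤
          max (C * ρ ^ k * distA ξ (setA A)) (γ (inputNorm u))) :
    ∃ M : ℕ, 0 < M ∧ ∃ c : ℝ, 0 ≤ c ∧ c < 1 ∧ ∃ γ : ℝ → ℝ, ClassK γ ∧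
      ∀ (ξ : ∀ i, E i), Bdd ξ → ∀ u : ℕ → ∀ i, P i, AdmInput u →
        ∀ i : ℕ, Metric.infDist (traj (netF I f) ξ u M i) (A i) ≤
          max (⨆ j, c * Metric.infDist (ξ j) (A j)) (γ (inputNorm u)) :=
  stmt15_general hwp hAne heISS

end Network
end
end
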